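/- Let (p_n)_{n≥1} be a Schauder decomposition of a complex Banach space X. Then (p_n) is R-Schauder if and only if for every nondecreasing sequence (c_n)_{n≥1} of real numbers with 0 < c_n < 1, the multiplier operator T = M_c has the property that the sets {T^n : n ≥ 0} and {n T^n (I − T) : n ≥ 1} are both R-bounded (i.e. T is R-Ritt). -/

import Mathlib

open Filter Topology NormedSpace

/-- Average over all sign vectors `(ε_1,…,ε_k) ∈ {−1,1}^k` of `‖∑_j ε_j v_j‖`. -/
noncomputable def signAvg {X : Type*} [NormedAddCommGroup X] [NormedSpace ℂ X]
    (k : ℕ) (v : Fin k → X) : ℝ :=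
  (2 ^ k : ℝ)⁻¹ * ∑ ε : Fin k → Bool, ‖∑ j : Fin k, (if ε j then (1 : ℝ) else -1) • v j‖

/-- A set of bounded operators on `X` is `R`-bounded. -/
def IsRBounded {X : Type*} [NormedAddCommGroup X] [NormedSpace ℂ X]
    (F : Set (X →L[ℂ] X)) : Prop :=
  ∃ C : ℝ, 0 ≤ C ∧ ∀ (k : ℕ) (T : Fin k → X →L[ℂ] X) (x : Fin k → X),
    (∀ j, T j ∈ F) → signAvg k (fun j => (T j) (x j)) ≤ C * signAvg k x

/-- `(p n)` is a Schauder decomposition of `X`: the `p n` are pairwise "orthogonal"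
bounded projections whose partial sums converge pointwise to the identity.
(Indexing starts at `0`, corresponding to `n = 1` in the classical notation.) -/
def IsSchauderDecomposition {X : Type*} [NormedAddCommGroup X] [NormedSpace ℂ X]
    (p : ℕ → X →L[ℂ] X) : Prop :=
  (∀ n, (p n).comp (p n) = p n) ∧
  (∀ m n, m ≠ n → (p m).comp (p n) = 0) ∧
  (∀ x : X, Tendsto (fun N => ∑ n ∈ Finset.range N, p n x) atTop (nhds x))

/-- The partial sum projection `P_N = ∑_{n<N} p_n`. -/
noncomputable def partialSum {X : Type*} [NormedAddCommGroup X] [NormedSpace ℂ X]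
    (p : ℕ → X →L[ℂ] X) (N : ℕ) : X →L[ℂ] X :=
  ∑ n ∈ Finset.range N, p n

section helpers
variable {X : Type*} [NormedAddCommGroup X] [NormedSpace ℂ X]

lemma signAvg_nonneg (k : ℕ) (v : Fin k → X) : 0 ≤ signAvg k v := by
  unfold signAvg; positivity

lemma signAvg_add_le (k : ℕ) (v w : Fin k → X) :
    signAvg k (fun j => v j + w j) ≤ signAvg k v + signAvg k w := by
  unfold signAvg
  rw [← mul_add, ← Finset.sum_add_distrib]
  gcongr with ε
  simp only [smul_add, Finset.sum_add_distrib]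
  exact norm_add_le _ _

lemma signAvg_smul (k : ℕ) (r : ℝ) (v : Fin k → X) :
    signAvg k (fun j => r • v j) = |r| * signAvg k v := by
  unfold signAvg
  rw [mul_left_comm]
  congr 1
  rw [Finset.mul_sum]
  refine Finset.sum_congr rfl fun ε _ => ?_
  rw [← Real.norm_eq_abs, ← norm_smul, Finset.smul_sum]
  congr 1
  exact Finset.sum_congr rfl fun j _ => smul_comm _ _ _

lemma signAvg_sub_le (k : ℕ) (v w : Fin k → X) :
    signAvg k (fun j => v j - w j) ≤ signAvg k v + signAvg k w := by
  have h := signAvg_add_le k v (fun j => (-1 : ℝ) • w j)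
  rw [signAvg_smul] at h
  simpa [sub_eq_add_neg] using h

lemma signAvg_flip (k : ℕ) (s : Fin k → Bool) (v : Fin k → X) :
    signAvg k (fun j => (if s j then (1 : ℝ) else -1) • v j) = signAvg k v := by
  unfold signAvg
  congr 1
  let e : (Fin k → Bool) ≃ (Fin k → Bool) :=
    Equiv.piCongrRight fun j => if s j then Equiv.refl Bool else Equiv.boolNot
  refine Fintype.sum_equiv e _ (fun ε : Fin k → Bool => ‖∑ j : Fin k, (if ε j then (1 : ℝ) else -1) • v j‖) fun ε => ?_
  congr 1
  refine Finset.sum_congr rfl fun j _ => ?_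
  rw [smul_smul]
  congr 1
  have : e ε j = if s j then ε j else !(ε j) := by
    simp only [e, Equiv.piCongrRight_apply, Pi.map_apply]
    split_ifs <;> simp
  rw [this]
  cases s j <;> cases ε j <;> simp

lemma signAvg_zeroing (k : ℕ) (s : Fin k → Bool) (v : Fin k → X) :
    signAvg k (fun j => if s j then v j else 0) ≤ signAvg k v := by
  have h := signAvg_add_le k (fun j => (1/2 : ℝ) • v j)
    (fun j => (1/2 : ℝ) • ((if s j then (1 : ℝ) else -1) • v j))
  rw [signAvg_smul, signAvg_smul, signAvg_flip] at h
  have e : (fun j => if s j then v j else 0) = (fun j => (1/2 : ℝ) • v j +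
      (1/2 : ℝ) • ((if s j then (1 : ℝ) else -1) • v j)) := by
    funext j
    cases s j
    · simp
    · simp [← add_smul]; norm_num
  rw [e]
  rw [abs_of_pos (by norm_num)] at h
  linarith

lemma signAvg_clm (k : ℕ) (E : X →L[ℂ] X) (M : ℝ) (hM : ∀ x, ‖E x‖ ≤ M * ‖x‖) (v : Fin k → X) :
    signAvg k (fun j => E (v j)) ≤ M * signAvg k v := by
  unfold signAvg
  rw [mul_left_comm]
  refine mul_le_mul_of_nonneg_left ?_ (by positivity)
  rw [Finset.mul_sum]
  refine Finset.sum_le_sum fun ε _ => ?_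
  refine le_trans (le_of_eq ?_) (hM _)
  rw [map_sum]
  congr 1
  refine Finset.sum_congr rfl fun j _ => ?_
  split_ifs <;> simp

lemma signAvg_sum_le (k : ℕ) (s : Finset ℕ) (v : ℕ → Fin k → X) :
    signAvg k (fun j => ∑ n ∈ s, v n j) ≤ ∑ n ∈ s, signAvg k (v n) := by
  classical
  induction s using Finset.induction_on with
  | empty => simp [signAvg]
  | insert a s ha ih =>
    simp only [Finset.sum_insert ha]
    exact (signAvg_add_le _ _ _).trans (by gcongr)

lemma signAvg_continuous (k : ℕ) : Continuous (signAvg k : (Fin k → X) → ℝ) := by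
  unfold signAvg
  fun_prop

lemma IsRBounded.add' {F G H : Set (X →L[ℂ] X)} (hF : IsRBounded F) (hG : IsRBounded G)
    (h : ∀ S ∈ H, ∃ A ∈ F, ∃ B ∈ G, S = A + B) : IsRBounded H := by
  obtain ⟨C, hC, hF⟩ := hF
  obtain ⟨D, hD, hG⟩ := hG
  refine ⟨C + D, by positivity, fun k T x hT => ?_⟩
  choose A hA B hB hAB using fun j => h (T j) (hT j)
  have := signAvg_add_le k (fun j => A j (x j)) (fun j => B j (x j))
  simp only [hAB, add_apply]
  have h1 := hF k A x hA
  have h2 := hG k B x hB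
  linarith

lemma IsRBounded.sub' {F G H : Set (X →L[ℂ] X)} (hF : IsRBounded F) (hG : IsRBounded G)
    (h : ∀ S ∈ H, ∃ A ∈ F, ∃ B ∈ G, S = A - B) : IsRBounded H := by
  obtain ⟨C, hC, hF⟩ := hF
  obtain ⟨D, hD, hG⟩ := hG
  refine ⟨C + D, by positivity, fun k T x hT => ?_⟩
  choose A hA B hB hAB using fun j => h (T j) (hT j)
  have := signAvg_sub_le k (fun j => A j (x j)) (fun j => B j (x j))
  simp only [hAB, sub_apply]
  have h1 := hF k A x hA
  have h2 := hG k B x hB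
  linarith

lemma IsRBounded.mono' {F H : Set (X →L[ℂ] X)} (hF : IsRBounded F) (h : H ⊆ F) :
    IsRBounded H := by
  obtain ⟨C, hC, hF⟩ := hF
  exact ⟨C, hC, fun k T x hT => hF k T x fun j => h (hT j)⟩

lemma IsRBounded.insert_zero {F : Set (X →L[ℂ] X)} (hF : IsRBounded F) (A : X →L[ℂ] X)
    (hA : A ∈ F) : IsRBounded (insert 0 F) := by
  classical
  obtain ⟨C, hC, hF⟩ := hF
  refine ⟨C, hC, fun k T x hT => ?_⟩
  have h1 := hF k (fun j => if T j ∈ F then T j else A)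
    (fun j => if (decide (T j ∈ F)) then x j else 0) (by intro j; split_ifs <;> assumption)
  have h2 := signAvg_zeroing k (fun j => decide (T j ∈ F)) x
  refine le_trans (le_of_eq ?_) (h1.trans (by gcongr))
  congr 1
  funext j
  by_cases h : T j ∈ F
  · simp [h]
  · have : T j = 0 := by simpa [h] using hT j
    simp only [h, decide_false]
    simp [this]

lemma IsRBounded.convexHull' {F : Set (X →L[ℂ] X)} (hF : IsRBounded F) :
    IsRBounded (convexHull ℝ F) := by
  obtain ⟨C, hC, hF⟩ := hF
  refine ⟨C, hC, fun k T x hT => ?_⟩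
  have hm : T ∈ convexHull ℝ (Set.univ.pi fun _ : Fin k => F) := by
    rw [convexHull_pi]
    exact fun j _ => hT j
  have hc : ConvexOn ℝ Set.univ (fun T : Fin k → X →L[ℂ] X => signAvg k (fun j => T j (x j))) := by
    refine ⟨convex_univ, fun A _ B _ a b ha hb _ => ?_⟩
    have := signAvg_add_le k (fun j => a • A j (x j)) (fun j => b • B j (x j))
    rw [signAvg_smul, signAvg_smul, abs_of_nonneg ha, abs_of_nonneg hb] at this
    simpa using this
  obtain ⟨A, hA, hle⟩ := (hc.subset (Set.subset_univ _) (convex_convexHull ℝ _)).exists_ge_of_mem_convexHull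
    (subset_convexHull ℝ _) hm
  exact hle.trans (hF k A x fun j => hA j trivial)

lemma IsRBounded.closure' {F H : Set (X →L[ℂ] X)} (hF : IsRBounded F)
    (h : ∀ S ∈ H, ∃ A : ℕ → X →L[ℂ] X, (∀ n, A n ∈ F) ∧
      ∀ x, Tendsto (fun n => A n x) atTop (nhds (S x))) : IsRBounded H := by
  obtain ⟨C, hC, hF⟩ := hF
  refine ⟨C, hC, fun k T x hT => ?_⟩
  choose A hA hlim using fun j => h (T j) (hT j)
  have ht : Tendsto (fun n => signAvg k (fun j => A j n (x j))) atTop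
      (nhds (signAvg k (fun j => T j (x j)))) :=
    ((signAvg_continuous k).tendsto _).comp (tendsto_pi_nhds.2 fun j => hlim j (x j))
  exact le_of_tendsto' ht fun n => hF k (fun j => A j n) x fun j => hA j n

lemma isRBounded_id : IsRBounded ({1} : Set (X →L[ℂ] X)) := by
  refine ⟨1, zero_le_one, fun k T x hT => ?_⟩
  have : ∀ j, T j = 1 := hT
  simp [this]

lemma isRBounded_summable (E : ℕ → X →L[ℂ] X) (M : ℝ) (hM : 0 ≤ M)
    (hE : ∀ n x, ‖E n x‖ ≤ M * (1/2)^n * ‖x‖) : IsRBounded (Set.range E) := by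
  classical
  refine ⟨M * 2, by positivity, fun k T x hT => ?_⟩
  choose N hN using hT
  have e : (fun j => T j (x j)) = fun j => ∑ n ∈ Finset.univ.image N,
      E n (if (decide (N j = n)) then x j else 0) := by
    funext j
    rw [Finset.sum_eq_single (N j)]
    · simp [hN]
    · intro b _ hb
      simp [hb.symm]
    · intro h; simp at h
  rw [e]
  refine (signAvg_sum_le k _ (fun n j => E n (if (decide (N j = n)) then x j else 0))).trans ?_
  have h1 : ∀ n ∈ Finset.univ.image N, signAvg k (fun j => E n (if (decide (N j = n)) then x j else 0))
      ≤ (1/2)^n * (M * signAvg k x) := by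
    intro n _
    refine (signAvg_clm k (E n) _ (hE n) _).trans ?_
    have := signAvg_zeroing k (fun j => decide (N j = n)) x
    calc _ ≤ M * (1/2)^n * signAvg k x := by gcongr
      _ = _ := by ring
  refine (Finset.sum_le_sum h1).trans ?_
  rw [← Finset.sum_mul]
  have h2 : ∑ n ∈ Finset.univ.image N, (1/2 : ℝ)^n ≤ 2 := by
    exact (summable_geometric_two.sum_le_tsum _ (fun _ _ => by positivity)).trans_eq tsum_geometric_two
  have := mul_nonneg hM (signAvg_nonneg k x)
  calc _ ≤ 2 * (M * signAvg k x) := by gcongr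
    _ = _ := by ring

lemma abel_id (p : ℕ → X →L[ℂ] X) (b : ℕ → ℝ) (N : ℕ) :
    ∑ j ∈ Finset.range (N+1), (b (j+1) - b j) • (partialSum p N - partialSum p j)
      = ∑ k ∈ Finset.range N, b (k+1) • p k - b 0 • partialSum p N := by
  induction N with
  | zero => simp [partialSum]
  | succ N ih =>
    rw [Finset.sum_range_succ, sub_self, smul_zero, add_zero]
    have e : partialSum p (N+1) = partialSum p N + p N := by
      simp [partialSum, Finset.sum_range_succ]
    have : ∀ j, (b (j+1) - b j) • (partialSum p (N+1) - partialSum p j)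
      = (b (j+1) - b j) • (partialSum p N - partialSum p j) + (b (j+1) - b j) • p N := by
      intro j; rw [e]; module
    simp only [this, Finset.sum_add_distrib, ih]
    rw [← Finset.sum_smul, Finset.sum_range_sub, Finset.sum_range_succ (fun k => b (k+1) • p k), e]
    module

/-- multipliers with monotone symbols in [0,1] -/
def monoMult (p : ℕ → X →L[ℂ] X) : Set (X →L[ℂ] X) :=
  {S | ∃ a : ℕ → ℝ, Monotone a ∧ (∀ n, 0 ≤ a n ∧ a n ≤ 1) ∧ ∀ k x, p k (S x) = a k • p k x}

lemma monoMult_rbounded (p : ℕ → X →L[ℂ] X) (hp : IsSchauderDecomposition p)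
    (h : IsRBounded (Set.range fun N : ℕ => partialSum p (N + 1))) : IsRBounded (monoMult p) := by
  have h0 := h.insert_zero _ ⟨0, rfl⟩
  have hmem : ∀ N, partialSum p N ∈ insert 0 (Set.range fun N : ℕ => partialSum p (N + 1)) := by
    intro N
    cases N with
    | zero => left; simp [partialSum]
    | succ n => right; exact ⟨n, rfl⟩
  have h1 : IsRBounded {S | ∃ M j, S = partialSum p M - partialSum p j} := by
    refine h0.sub' h0 ?_
    rintro S ⟨M, j, rfl⟩
    exact ⟨_, hmem M, _, hmem j, rfl⟩
  refine h1.convexHull'.closure' ?_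
  rintro S ⟨a, ha, ha01, hS⟩
  refine ⟨fun N => ∑ k ∈ Finset.range N, a k • p k, fun N => ?_, fun x => ?_⟩
  · let b : ℕ → ℝ := fun j => if j = 0 then 0 else if j ≤ N then a (j-1) else 1
    have hb : Monotone b := by
      refine monotone_nat_of_le_succ fun n => ?_
      simp only [b]
      have := ha01
      rcases Nat.eq_zero_or_pos n with rfl | hn
      · simp; split_ifs
        · exact (ha01 0).1
        · norm_num
      · rw [if_neg (show ¬ n = 0 by omega), if_neg (show ¬ n + 1 = 0 by omega)]
        split_ifs
        · exact ha (by omega)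
        · exact (ha01 _).2
        · omega
        · exact le_rfl
    have key := abel_id p b N
    have e : ∑ k ∈ Finset.range N, b (k+1) • p k = ∑ k ∈ Finset.range N, a k • p k := by
      refine Finset.sum_congr rfl fun k hk => ?_
      have : k + 1 ≤ N := by simpa using hk
      simp [b, this]
    have hb0 : b 0 = 0 := by simp [b]
    rw [e, hb0, zero_smul, sub_zero] at key
    change ∑ k ∈ Finset.range N, a k • p k ∈ _
    rw [← key]
    refine (convex_convexHull ℝ _).sum_mem (fun j _ => sub_nonneg.2 (hb (Nat.le_succ j))) ?_
      (fun j _ => subset_convexHull ℝ _ ⟨N, j, rfl⟩)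
    rw [Finset.sum_range_sub, hb0]
    simp [b]
  · have := hp.2.2 (S x)
    simpa [hS] using this

lemma mult_apply (p : ℕ → X →L[ℂ] X) (hp : IsSchauderDecomposition p) (c : ℕ → ℝ) (T : X →L[ℂ] X)
    (hT : ∀ x : X, Tendsto (fun N => ∑ n ∈ Finset.range N, ((c n : ℝ) : ℂ) • p n x)
            atTop (nhds (T x))) (k : ℕ) (x : X) : p k (T x) = c k • p k x := by
  have h1 := ((p k).continuous.tendsto _).comp (hT x)
  refine tendsto_nhds_unique h1 ?_
  refine tendsto_const_nhds.congr' ?_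
  filter_upwards [eventually_gt_atTop k] with N hN
  simp only [Function.comp, map_sum, map_smul]
  rw [Finset.sum_eq_single k]
  · have : p k (p k x) = p k x := congrArg (fun f => f x) (hp.1 k)
    rw [this]; simp
  · intro b _ hb
    have : p k (p b x) = 0 := congrArg (fun f => f x) (hp.2.1 k b hb.symm)
    rw [this, smul_zero]
  · intro h; simp at h; omega

lemma mult_pow (p : ℕ → X →L[ℂ] X) (c : ℕ → ℝ) (T : X →L[ℂ] X)
    (hT : ∀ k x, p k (T x) = c k • p k x) (n k : ℕ) (x : X) :
    p k ((T ^ n) x) = c k ^ n • p k x := by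
  induction n with
  | zero => simp
  | succ n ih =>
    rw [pow_succ' T, mul_apply_eq_comp, hT, ih, smul_smul, pow_succ']

lemma u_mono (n : ℕ) (hn : 1 ≤ n) :
    MonotoneOn (fun t : ℝ => (n:ℝ) * t^n - (n:ℝ)^2/(n+1) * t^(n+1)) (Set.Icc 0 1) := by
  refine monotoneOn_of_deriv_nonneg (convex_Icc 0 1) (by fun_prop) (by fun_prop) ?_
  intro t ht
  rw [interior_Icc] at ht
  have hd : HasDerivAt (fun t : ℝ => (n:ℝ) * t^n - (n:ℝ)^2/(n+1) * t^(n+1))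
    ((n:ℝ) * (n * t^(n-1)) - (n:ℝ)^2/(n+1) * (((n+1 : ℕ):ℝ) * t^n)) t :=
    ((hasDerivAt_pow n t).const_mul _).sub ((hasDerivAt_pow (n+1) t).const_mul _)
  rw [hd.deriv]
  have e : t^n = t * t^(n-1) := by
    rw [← pow_succ']; congr 1; omega
  have : (n:ℝ) * (n * t^(n-1)) - (n:ℝ)^2/(n+1) * (((n+1 : ℕ):ℝ) * t^n)
    = (n:ℝ)^2 * t^(n-1) * (1 - t) := by
    rw [e]; push_cast; field_simp
  rw [this]
  have h1 := ht.1
  have h2 : 0 ≤ 1 - t := by linarith [ht.2]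
  positivity

lemma forward (p : ℕ → X →L[ℂ] X) (hp : IsSchauderDecomposition p)
    (h : IsRBounded (Set.range fun N : ℕ => partialSum p (N + 1)))
    (c : ℕ → ℝ) (hc : Monotone c) (hc1 : ∀ n, 0 < c n ∧ c n < 1) (T : X →L[ℂ] X)
    (hT : ∀ x : X, Tendsto (fun N => ∑ n ∈ Finset.range N, ((c n : ℝ) : ℂ) • p n x)
            atTop (nhds (T x))) :
    IsRBounded (Set.range fun n : ℕ => T ^ n) ∧
    IsRBounded {S : X →L[ℂ] X | ∃ n : ℕ, 1 ≤ n ∧ S = (n : ℂ) • (T ^ n * (1 - T))} := by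
  have hG := monoMult_rbounded p hp h
  have hT' := mult_pow p c T (mult_apply p hp c T hT)
  constructor
  · refine hG.mono' ?_
    rintro _ ⟨n, rfl⟩
    refine ⟨fun k => c k ^ n, fun i j hij => pow_le_pow_left₀ (hc1 i).1.le (hc hij) n,
      fun k => ⟨pow_nonneg (hc1 k).1.le n, pow_le_one₀ (hc1 k).1.le (hc1 k).2.le⟩, hT' n⟩
  · refine hG.sub' hG ?_
    rintro _ ⟨n, hn, rfl⟩
    have hI : ∀ k, c k ∈ Set.Icc (0:ℝ) 1 := fun k => ⟨(hc1 k).1.le, (hc1 k).2.le⟩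
    have hn' : (0:ℝ) ≤ (n:ℝ)/(n+1) := by positivity
    have hn1 : (n:ℝ)/(n+1) ≤ 1 := by
      rw [div_le_one (by positivity)]; linarith
    refine ⟨(n:ℝ) • T^n - ((n:ℝ)^2/(n+1)) • T^(n+1), ⟨fun k => (n:ℝ) * (c k)^n - (n:ℝ)^2/(n+1) * (c k)^(n+1),
      fun i j hij => u_mono n hn (hI i) (hI j) (hc hij), fun k => ⟨?_, ?_⟩, fun k x => ?_⟩,
      ((n:ℝ)/(n+1)) • T^(n+1), ⟨fun k => (n:ℝ)/(n+1) * (c k)^(n+1), fun i j hij => ?_, fun k => ⟨?_, ?_⟩,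
        fun k x => ?_⟩, ?_⟩
    · have := u_mono n hn (Set.left_mem_Icc.2 zero_le_one) (hI k) (hI k).1
      simpa [show n ≠ 0 by omega] using this
    · have := u_mono n hn (hI k) (Set.right_mem_Icc.2 zero_le_one) (hI k).2
      refine this.trans (le_trans (le_of_eq ?_) hn1)
      simp; field_simp; ring
    · have h1 := hT' n k x
      have h2 := hT' (n+1) k x
      have hpr : ∀ (r : ℝ) (y : X), p k (r • y) = r • p k y := fun r y => (p k).map_smul_of_tower r y
      simp only [sub_apply, smul_apply, map_sub,
        hpr, h1, h2, smul_smul, sub_smul]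
    · have := pow_le_pow_left₀ (hc1 i).1.le (hc hij) (n+1)
      dsimp only; gcongr
    · have := (hI k).1; positivity
    · exact mul_le_one₀ hn1 (pow_nonneg (hI k).1 _) (pow_le_one₀ (hI k).1 (hI k).2)
    · have h2 := hT' (n+1) k x
      have hpr : ∀ (r : ℝ) (y : X), p k (r • y) = r • p k y := fun r y => (p k).map_smul_of_tower r y
      simp only [smul_apply, hpr, h2, smul_smul]
    · have e : (n : ℂ) • (T ^ n * (1 - T)) = (n:ℝ) • (T ^ n * (1 - T)) := by
        ext x; simp [← Complex.coe_smul]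
      rw [e, mul_sub, mul_one, ← pow_succ, sub_sub, ← add_smul, smul_sub]
      congr 2
      field_simp

lemma unif_bound [CompleteSpace X] (p : ℕ → X →L[ℂ] X) (hp : IsSchauderDecomposition p) :
    ∃ B, 0 ≤ B ∧ ∀ k, ‖p k‖ ≤ B := by
  have : ∃ B, ∀ k, ‖p k‖ ≤ B := by
    refine banach_steinhaus fun x => ?_
    have h1 := hp.2.2 x
    have h2 := (h1.comp (tendsto_add_atTop_nat 1)).sub h1
    have h3 : Tendsto (fun k => p k x) atTop (nhds 0) := by
      simpa [Function.comp_def, Finset.sum_range_succ] using h2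
    obtain ⟨C, hC⟩ := h3.norm.bddAbove_range
    exact ⟨C, fun k => hC ⟨k, rfl⟩⟩
  obtain ⟨B, hB⟩ := this
  exact ⟨B, (norm_nonneg _).trans (hB 0), hB⟩

lemma coef_bound (N k : ℕ) (c : ℝ) (hc : c = 1 - (1/2)^(2*(k+1)^2)) :
    |c ^ (2^(2*N^2+2*N)) - (if k < N then 0 else 1)| ≤ (1/2)^N * (1/2)^k := by
  set d : ℝ := (1/2)^(2*(k+1)^2) with hd
  have hd0 : 0 < d := by positivity
  have hd1 : d ≤ 1 := pow_le_one₀ (by norm_num) (by norm_num)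
  have hc0 : 0 ≤ c := by linarith
  have hc1 : c ≤ 1 := by linarith
  set m : ℕ := 2^(2*N^2+2*N) with hm
  rw [← pow_add]
  split_ifs with h
  · rw [sub_zero, abs_of_nonneg (by positivity)]
    -- c ≤ 1/(1+d)
    have h1 : c ^ m * (1 + d)^m ≤ 1 := by
      rw [← mul_pow]
      refine pow_le_one₀ (by positivity) ?_
      rw [hc]; nlinarith
    have h2 : 1 + m * d ≤ (1+d)^m := one_add_mul_le_pow (by linarith) m
    have h3 : (2:ℝ)^(N+k) ≤ m * d := by
      rw [hm, hd]; push_cast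
      rw [one_div, inv_pow, ← div_eq_mul_inv, le_div_iff₀ (by positivity), ← pow_add]
      refine pow_le_pow_right₀ (by norm_num) ?_
      have : k + 1 ≤ N := h
      nlinarith
    have h4 : c^m * 2^(N+k) ≤ 1 := by
      refine le_trans ?_ h1
      gcongr
      linarith
    rw [one_div, inv_pow, ← one_div, le_div_iff₀ (by positivity)]
    exact h4
  · have h1 : 1 - m * d ≤ c^m := by
      have := one_add_mul_le_pow (a := -d) (by linarith) m
      rw [hc]
      calc _ = 1 + m * (-d) := by ring
        _ ≤ _ := this
    have h2 : c^m ≤ 1 := pow_le_one₀ hc0 hc1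
    rw [abs_sub_comm, abs_of_nonneg (by linarith)]
    have h3 : m * d ≤ (1/2 : ℝ)^(N+k) := by
      rw [hm, hd]; push_cast
      rw [one_div, inv_pow, inv_pow, ← div_eq_mul_inv, ← one_div, div_le_div_iff₀ (by positivity) (by positivity), ← pow_add, one_mul]
      refine pow_le_pow_right₀ (by norm_num) ?_
      have : N ≤ k := by omega
      nlinarith
    linarith

lemma backward [CompleteSpace X] (p : ℕ → X →L[ℂ] X) (hp : IsSchauderDecomposition p)
    (H : ∀ c : ℕ → ℝ, Monotone c → (∀ n, 0 < c n ∧ c n < 1) →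
        ∀ T : X →L[ℂ] X,
          (∀ x : X, Tendsto (fun N => ∑ n ∈ Finset.range N, ((c n : ℝ) : ℂ) • p n x)
            atTop (nhds (T x))) →
          IsRBounded (Set.range fun n : ℕ => T ^ n)) :
    IsRBounded (Set.range fun N : ℕ => partialSum p (N + 1)) := by
  obtain ⟨B, hB0, hB⟩ := unif_bound p hp
  let d : ℕ → ℝ := fun k => (1/2)^(2*(k+1)^2)
  let c : ℕ → ℝ := fun k => 1 - d k
  have hdpos : ∀ k, 0 < d k := fun k => by positivity
  have hdle : ∀ k, d k ≤ (1/2)^k := fun k =>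
    pow_le_pow_of_le_one (by norm_num) (by norm_num) (by nlinarith)
  have hd1 : ∀ k, d k < 1 := fun k => pow_lt_one₀ (by norm_num) (by norm_num) (by positivity)
  have hcm : Monotone c := by
    intro i j hij
    have : d j ≤ d i := pow_le_pow_of_le_one (by norm_num) (by norm_num) (by gcongr)
    simp only [c]; linarith
  have hs : Summable fun k => d k • p k := by
    refine Summable.of_norm_bounded (summable_geometric_two.mul_right B) fun k => ?_
    rw [norm_smul, Real.norm_eq_abs, abs_of_pos (hdpos k)]
    have := hdle k
    have := hB k
    gcongr
  let T : X →L[ℂ] X := 1 - ∑' k, d k • p k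
  have hT : ∀ x : X, Tendsto (fun N => ∑ n ∈ Finset.range N, ((c n : ℝ) : ℂ) • p n x)
            atTop (nhds (T x)) := by
    intro x
    have h1 := hs.hasSum.tendsto_sum_nat
    have h2 := ((ContinuousLinearMap.apply ℂ X x).continuous.tendsto _).comp h1
    have h3 := (hp.2.2 x).sub h2
    refine (h3.congr fun N => ?_)
    simp [c, sub_smul, Finset.sum_sub_distrib, sum_apply]
  have hR := H c hcm (fun n => ⟨by simp only [c]; linarith [hd1 n], by simp only [c]; linarith [hdpos n]⟩) T hT
  have hT' := mult_pow p c T (mult_apply p hp c T hT)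
  let E : ℕ → X →L[ℂ] X := fun N => T^(2^(2*N^2+2*N)) - (1 - partialSum p N)
  have hpE : ∀ N k x, p k (E N x) = (c k ^ (2^(2*N^2+2*N)) - (if k < N then 0 else 1)) • p k x := by
    intro N k x
    have hP : p k (partialSum p N x) = if k < N then p k x else 0 := by
      have h1 : ∀ j, p k (p j x) = if k = j then p k x else 0 := by
        intro j
        split_ifs with h
        · subst h; exact congrArg (fun f => f x) (hp.1 k)
        · exact congrArg (fun f => f x) (hp.2.1 k j h)
      simp [partialSum, sum_apply, h1]
    simp only [E, sub_apply, map_sub, hT', hP, one_apply_eq_self]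
    split_ifs <;> simp [sub_smul]
  have hE : ∀ N x, ‖E N x‖ ≤ (2 * B) * (1/2)^N * ‖x‖ := by
    intro N x
    refine le_of_tendsto' (hp.2.2 (E N x)).norm fun M => ?_
    have hk : ∀ k, ‖p k (E N x)‖ ≤ (1/2)^k * ((1/2)^N * B * ‖x‖) := by
      intro k
      rw [hpE, norm_smul, Real.norm_eq_abs]
      have h1 := coef_bound N k (c k) rfl
      have h2 := (p k).le_of_opNorm_le (hB k) x
      calc _ ≤ ((1/2)^N * (1/2)^k) * (B * ‖x‖) := by gcongr
        _ = _ := by ring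
    calc _ ≤ ∑ k ∈ Finset.range M, (1/2 : ℝ)^k * ((1/2)^N * B * ‖x‖) :=
          norm_sum_le_of_le _ fun k _ => hk k
      _ = (∑ k ∈ Finset.range M, (1/2 : ℝ)^k) * ((1/2)^N * B * ‖x‖) := by rw [Finset.sum_mul]
      _ ≤ 2 * ((1/2)^N * B * ‖x‖) := by
          gcongr
          exact sum_geometric_two_le M
      _ = _ := by ring
  have hER := isRBounded_summable E (2*B) (by positivity) hE
  have h1 : IsRBounded {S : X →L[ℂ] X | ∃ n, S = 1 - T^n} := by
    refine isRBounded_id.sub' hR ?_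
    rintro _ ⟨n, rfl⟩
    exact ⟨1, rfl, _, ⟨n, rfl⟩, rfl⟩
  refine h1.add' hER ?_
  rintro _ ⟨N, rfl⟩
  refine ⟨_, ⟨2^(2*(N+1)^2+2*(N+1)), rfl⟩, E (N+1), ⟨_, rfl⟩, ?_⟩
  simp only [E]
  abel

end helpers

/-- A Schauder decomposition is `R`-Schauder iff every multiplier `T = M_c` associated
with a nondecreasing sequence `0 < c_n < 1` is `R`-Ritt. -/
theorem statement12 {X : Type*} [NormedAddCommGroup X] [NormedSpace ℂ X] [CompleteSpace X]
    (p : ℕ → X →L[ℂ] X) (hp : IsSchauderDecomposition p) :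
    IsRBounded (Set.range fun N : ℕ => partialSum p (N + 1)) ↔
      ∀ c : ℕ → ℝ, Monotone c → (∀ n, 0 < c n ∧ c n < 1) →
        ∀ T : X →L[ℂ] X,
          (∀ x : X, Tendsto (fun N => ∑ n ∈ Finset.range N, ((c n : ℝ) : ℂ) • p n x)
            atTop (nhds (T x))) →
          IsRBounded (Set.range fun n : ℕ => T ^ n) ∧
          IsRBounded {S : X →L[ℂ] X | ∃ n : ℕ, 1 ≤ n ∧ S = (n : ℂ) • (T ^ n * (1 - T))} := by
  constructor
  · intro h c hc hc1 T hT
    exact forward p hp h c hc hc1 T hT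
  · intro H
    exact backward p hp fun c hc hc1 T hT => (H c hc hc1 T hT).1
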